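/- Let Γ be a non-empty set and let ℓ_∞(Γ, ℂ) be the complex Banach space of bounded functions from Γ to ℂ with the supremum norm. Then ℓ_∞(Γ, ℂ) satisfies the Mazur–Ulam property: for every real Banach space Y, every surjective isometry Δ : S(ℓ_∞(Γ, ℂ)) → S(Y) between the unit spheres extends to a surjective real-linear isometry from ℓ_∞(Γ, ℂ) onto Y. (This is an instance of the result that every JBW*-triple whose atomic part of the bidual is not a rank-two Cartan factor satisfies the Mazur–Ulam property.) -/

import Mathlib

/-!
Let `Δ` be a surjective isometry from the unit sphere of the `ℓ_∞`-sum of Hilbert spaces `E γ` onto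
the unit sphere of `Y`. It maps each face `{x | ‖x‖ = 1 ∧ x γ = z}` onto a convex set, so that some
`φ` in the unit ball of the dual of `Y` equals `1` on this image. Comparing distances gives
`φ (Δ x) = ⟪z, x γ⟫ + O(‖x γ‖ ^ 2)`. If `‖x δ‖ = 1` for some `δ ≠ γ`, then `Δ x` lies in the convex
image of a face at `δ`, in which the value at `γ` can be scaled down along a segment, and the error
term disappears. Otherwise, `x` has coordinates of norm close to `1` that can be normalized, or
`‖x γ‖ = 1` and some `x δ` can be split as a convex combination of unit vectors. Finally,
`φ (Δ x) = ⟪z, x γ⟫` for all `γ` and `z` forces the homogeneous extension of `Δ` to be linear.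

If there is at most one coordinate, `Δ` commutes with negation, hence `Y` satisfies the
parallelogram law for unit vectors. By Day's theorem `Y` is an inner product space, and `Δ`
preserves inner products. Day's theorem reduces to a plane, where an inscribed ellipse of maximal
area touches the unit circle at two points which are not proportional; by the parallelogram law the
contact points are closed under midpoints, so they fill the ellipse.
-/

theorem Icc_subset_of_isClosed_of_midpoint_mem {S : Set ℝ} (hS : IsClosed S) {a b : ℝ}
    (ha : a ∈ S) (hb : b ∈ S)
    (hmid : ∀ x ∈ S ∩ Set.Icc a b, ∀ y ∈ S ∩ Set.Icc a b, (x + y) / 2 ∈ S) :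
    Set.Icc a b ⊆ S := by
  intro θ hθ
  obtain ⟨p, ⟨hpS, hp⟩, hpmax⟩ :=
    ((isCompact_Icc (a := a) (b := θ)).inter_left hS).exists_isGreatest ⟨a, ha, le_refl a, hθ.1⟩
  obtain ⟨q, ⟨hqS, hq⟩, hqmin⟩ :=
    ((isCompact_Icc (a := θ) (b := b)).inter_left hS).exists_isLeast ⟨b, hb, hθ.2, le_refl b⟩
  have hm := hmid p ⟨hpS, hp.1, hp.2.trans hθ.2⟩ q ⟨hqS, hθ.1.trans hq.1, hq.2⟩
  have hqp : q ≤ p := by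
    rcases le_total ((p + q) / 2) θ with h | h
    · linarith [hpmax ⟨hm, by linarith [hp.1, hp.2, hq.1], h⟩]
    · linarith [hqmin ⟨hm, h, by linarith [hp.2, hq.1, hq.2]⟩]
  rwa [show θ = p by linarith [hp.2, hq.1]]

section Day

open Real

variable {Y : Type*} [NormedAddCommGroup Y] [NormedSpace ℝ Y]

/-- The point of eccentric angle `θ` on the ellipse with conjugate semi-diameters `p` and `q`. -/
noncomputable def ellipse (p q : Y) (θ : ℝ) : Y := cos θ • p + sin θ • q

/-- The ellipse with conjugate semi-diameters `p` and `q` lies in the closed unit ball. -/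
def EllipseInBall (p q : Y) : Prop := ∀ θ, ‖ellipse p q θ‖ ≤ 1

@[fun_prop]
theorem continuous_ellipse (p q : Y) : Continuous (ellipse p q) := by
  unfold ellipse
  fun_prop

@[simp]
theorem ellipse_zero (p q : Y) : ellipse p q 0 = p := by simp [ellipse]

@[simp]
theorem ellipse_pi_div_two (p q : Y) : ellipse p q (π / 2) = q := by simp [ellipse]

theorem ellipse_add_pi (p q : Y) (θ : ℝ) : ellipse p q (θ + π) = -ellipse p q θ := by
  simp only [ellipse, cos_add_pi, sin_add_pi]
  module

theorem norm_ellipse_add_pi (p q : Y) (θ : ℝ) : ‖ellipse p q (θ + π)‖ = ‖ellipse p q θ‖ := by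
  rw [ellipse_add_pi, norm_neg]

theorem ellipse_ellipse (p q : Y) (α θ : ℝ) :
    ellipse (ellipse p q α) (ellipse p q (α + π / 2)) θ = ellipse p q (α + θ) := by
  rw [ellipse, ellipse, ellipse, ellipse, cos_add_pi_div_two, sin_add_pi_div_two, cos_add, sin_add]
  module

theorem ellipse_add_ellipse (p q : Y) (x y : ℝ) :
    ellipse p q x + ellipse p q y = (2 * cos ((x - y) / 2)) • ellipse p q ((x + y) / 2) := by
  simp only [ellipse]
  rw [add_add_add_comm, ← add_smul, ← add_smul, cos_add_cos, sin_add_sin]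
  module

theorem ellipse_sub_ellipse (p q : Y) (x y : ℝ) : ellipse p q x - ellipse p q y =
    (2 * sin ((x - y) / 2)) • ellipse p q ((x + y) / 2 + π / 2) := by
  simp only [ellipse]
  rw [add_sub_add_comm, ← sub_smul, ← sub_smul, cos_sub_cos, sin_sub_sin, cos_add_pi_div_two,
    sin_add_pi_div_two]
  module

theorem exists_smul_add_smul_eq_smul_ellipse (p q : Y) (s t : ℝ) :
    ∃ θ, s • p + t • q = √(s ^ 2 + t ^ 2) • ellipse p q θ := by
  let z : ℂ := ⟨s, t⟩
  refine ⟨z.arg, ?_⟩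
  have hz : √(s ^ 2 + t ^ 2) = ‖z‖ := (Complex.norm_eq_sqrt_sq_add_sq z).symm
  rw [hz, ellipse, smul_add, smul_smul, smul_smul, Complex.norm_mul_cos_arg,
    Complex.norm_mul_sin_arg]

theorem EllipseInBall.norm_smul_add_smul_sq_le {p q : Y} (hpq : EllipseInBall p q) (s t : ℝ) :
    ‖s • p + t • q‖ ^ 2 ≤ s ^ 2 + t ^ 2 := by
  obtain ⟨θ, hθ⟩ := exists_smul_add_smul_eq_smul_ellipse p q s t
  rw [hθ, norm_smul, mul_pow, norm_eq_abs, sq_abs, sq_sqrt (by positivity)]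
  exact mul_le_of_le_one_right (by positivity) (pow_le_one₀ (norm_nonneg _) (hpq θ))

theorem norm_smul_add_smul_sq_of_norm_ellipse {p q : Y} (hpq : ∀ θ, ‖ellipse p q θ‖ = 1)
    (s t : ℝ) : ‖s • p + t • q‖ ^ 2 = s ^ 2 + t ^ 2 := by
  obtain ⟨θ, hθ⟩ := exists_smul_add_smul_eq_smul_ellipse p q s t
  rw [hθ, norm_smul, mul_pow, norm_eq_abs, sq_abs, sq_sqrt (by positivity), hpq, one_pow, mul_one]

theorem EllipseInBall.rotate {p q : Y} (hpq : EllipseInBall p q) (α : ℝ) :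
    EllipseInBall (ellipse p q α) (ellipse p q (α + π / 2)) := fun θ => by
  rw [ellipse_ellipse]
  exact hpq _

theorem EllipseInBall.norm_ellipse_midpoint {p q : Y} (hpq : EllipseInBall p q)
    (h : ∀ u v : Y, ‖u‖ = 1 → ‖v‖ = 1 → ‖u + v‖ ^ 2 + ‖u - v‖ ^ 2 = 4) {x y : ℝ}
    (hx : ‖ellipse p q x‖ = 1) (hy : ‖ellipse p q y‖ = 1) (hxy : cos ((x - y) / 2) ≠ 0) :
    ‖ellipse p q ((x + y) / 2)‖ = 1 := by
  have key := h _ _ hx hy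
  rw [ellipse_add_ellipse, ellipse_sub_ellipse, norm_smul, norm_smul, mul_pow, mul_pow,
    norm_eq_abs, norm_eq_abs, sq_abs, sq_abs] at key
  have hm := pow_le_one₀ (n := 2) (norm_nonneg _) (hpq ((x + y) / 2))
  have hm' := pow_le_one₀ (n := 2) (norm_nonneg _) (hpq ((x + y) / 2 + π / 2))
  refine (pow_eq_one_iff_of_nonneg (norm_nonneg _) two_ne_zero).1 (le_antisymm hm ?_)
  have hcos : 0 < cos ((x - y) / 2) ^ 2 := by positivity
  by_contra! hlt
  nlinarith [sin_sq_add_cos_sq ((x - y) / 2), sq_nonneg (sin ((x - y) / 2))]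

theorem EllipseInBall.norm_ellipse_eq_one_of_mem_Icc {p q : Y} (hpq : EllipseInBall p q)
    (h : ∀ u v : Y, ‖u‖ = 1 → ‖v‖ = 1 → ‖u + v‖ ^ 2 + ‖u - v‖ ^ 2 = 4) {a b θ : ℝ}
    (ha : ‖ellipse p q a‖ = 1) (hb : ‖ellipse p q b‖ = 1) (hab : b < a + π)
    (hθ : θ ∈ Set.Icc a b) : ‖ellipse p q θ‖ = 1 := by
  have hclosed : IsClosed {θ | ‖ellipse p q θ‖ = 1} :=
    isClosed_eq (by fun_prop) continuous_const
  refine Icc_subset_of_isClosed_of_midpoint_mem hclosed ha hb (fun x hx y hy => ?_) hθ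
  refine hpq.norm_ellipse_midpoint h hx.1 hy.1 (cos_pos_of_mem_Ioo ⟨?_, ?_⟩).ne' <;>
    linarith [hx.2.1, hx.2.2, hy.2.1, hy.2.2]

theorem EllipseInBall.norm_ellipse_eq_one_of_sin_ne_zero {p q : Y} (hpq : EllipseInBall p q)
    (h : ∀ u v : Y, ‖u‖ = 1 → ‖v‖ = 1 → ‖u + v‖ ^ 2 + ‖u - v‖ ^ 2 = 4) {x y : ℝ}
    (hx : ‖ellipse p q x‖ = 1) (hy : ‖ellipse p q y‖ = 1) (hxy : sin (y - x) ≠ 0) (θ : ℝ) :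
    ‖ellipse p q θ‖ = 1 := by
  have hper : Function.Periodic (fun θ => (‖ellipse p q θ‖, sin (θ - x) ^ 2)) π := fun θ => by
    simp only [norm_ellipse_add_pi, add_sub_right_comm θ π x, sin_add_pi, neg_sq]
  obtain ⟨y', hy'mem, hyy'⟩ := hper.exists_mem_Ioc pi_pos y x
  obtain ⟨θ', hθ'mem, hθθ'⟩ := hper.exists_mem_Ioc pi_pos θ x
  obtain ⟨hnorm, hsin⟩ := Prod.ext_iff.1 hyy'
  have hy' : ‖ellipse p q y'‖ = 1 := hnorm.symm.trans hy
  have hne : y' ≠ x + π := fun heq => by simp [heq, hxy] at hsin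
  have hlt : y' < x + π := lt_of_le_of_ne hy'mem.2 hne
  rw [show ‖ellipse p q θ‖ = ‖ellipse p q θ'‖ from (Prod.ext_iff.1 hθθ').1]
  rcases le_total θ' y' with hle | hle
  · exact hpq.norm_ellipse_eq_one_of_mem_Icc h hx hy' hlt ⟨hθ'mem.1.le, hle⟩
  · refine hpq.norm_ellipse_eq_one_of_mem_Icc h hy' ?_ ?_ ⟨hle, hθ'mem.2⟩
    · rw [norm_ellipse_add_pi, hx]
    · linarith [hy'mem.1]

/- As the area is multiplied by `(1 - ε) * (1 + 2 * ε) > 1` for small `ε`, a maximal ellipse has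
contact points with `1 / 4 ≤ sin θ ^ 2`. -/
theorem EllipseInBall.stretch {p q : Y} (hpq : EllipseInBall p q) {ε ρ : ℝ} (hε : 0 ≤ ε)
    (hε' : ε ≤ 2 / 7) (hρε : ρ + 3 * ε ≤ 1)
    (hρ : ∀ θ, 1 / 4 ≤ sin θ ^ 2 → ‖ellipse p q θ‖ ≤ ρ) :
    EllipseInBall ((1 - ε) • p) ((1 + 2 * ε) • q) := by
  intro θ
  rcases le_total (1 / 4) (sin θ ^ 2) with hθ | hθ
  · have hq : ‖q‖ ≤ 1 := by simpa using hpq (π / 2)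
    calc ‖ellipse ((1 - ε) • p) ((1 + 2 * ε) • q) θ‖
        = ‖(1 - ε) • ellipse p q θ + (3 * ε * sin θ) • q‖ := by
          congr 1
          simp only [ellipse]
          module
      _ ≤ (1 - ε) * ‖ellipse p q θ‖ + 3 * ε * |sin θ| * ‖q‖ := by
          refine (norm_add_le _ _).trans_eq ?_
          rw [norm_smul, norm_smul, norm_of_nonneg (by linarith), norm_mul,
            norm_of_nonneg (by positivity : 0 ≤ 3 * ε), norm_eq_abs]
      _ ≤ 1 * ρ + 3 * ε * 1 * 1 := by
          gcongr
          · linarith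
          · exact hρ θ hθ
          · exact abs_sin_le_one θ
      _ ≤ 1 := by linarith
  · have hle := hpq.norm_smul_add_smul_sq_le (cos θ * (1 - ε)) (sin θ * (1 + 2 * ε))
    rw [mul_smul, mul_smul] at hle
    refine (sq_le_one_iff₀ (norm_nonneg _)).1 (hle.trans ?_)
    nlinarith [sin_sq_add_cos_sq θ, mul_nonneg hε (sub_nonneg.2 hθ),
      mul_nonneg hε (mul_nonneg hε (sub_nonneg.2 hθ))]

theorem EllipseInBall.exists_norm_ellipse_eq_one {p q : Y} (hpq : EllipseInBall p q)
    (ω : Y →ₗ[ℝ] Y →ₗ[ℝ] ℝ) (hω : 0 < ω p q)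
    (hmax : ∀ p' q', EllipseInBall p' q' → ω p' q' ≤ ω p q) :
    ∃ θ, ‖ellipse p q θ‖ = 1 ∧ 1 / 4 ≤ sin θ ^ 2 := by
  have hper : Function.Periodic (fun θ => (‖ellipse p q θ‖, sin θ ^ 2)) π := fun θ => by
    simp only [norm_ellipse_add_pi, sin_add_pi, neg_sq]
  have hcompact : IsCompact (Set.Icc 0 π ∩ {θ | 1 / 4 ≤ sin θ ^ 2}) :=
    isCompact_Icc.inter_right (isClosed_le continuous_const (by fun_prop))
  obtain ⟨θ₀, ⟨-, hθ₀⟩, hθ₀max⟩ := hcompact.exists_isMaxOn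
    ⟨π / 2, ⟨by positivity, by linarith [pi_pos]⟩, by norm_num⟩
    (continuous_ellipse p q).norm.continuousOn
  refine ⟨θ₀, (hpq θ₀).antisymm ?_, hθ₀⟩
  by_contra! hlt
  have hle : ∀ θ, 1 / 4 ≤ sin θ ^ 2 → ‖ellipse p q θ‖ ≤ ‖ellipse p q θ₀‖ := fun θ hθ => by
    obtain ⟨θ', hθ'mem, hθθ'⟩ := hper.exists_mem_Ico₀ pi_pos θ
    obtain ⟨hnorm, hsin⟩ := Prod.ext_iff.1 hθθ'
    exact hnorm.trans_le (hθ₀max ⟨Set.Ico_subset_Icc_self hθ'mem, hθ.trans_eq hsin⟩)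
  obtain ⟨ε, hε, hε'⟩ := exists_between
    (lt_min (by norm_num : (0 : ℝ) < 2 / 7) (div_pos (sub_pos.2 hlt) three_pos))
  obtain ⟨hε₁, hε₂⟩ := lt_min_iff.1 hε'
  have hle' := hmax _ _ (hpq.stretch hε.le hε₁.le (by linarith) hle)
  simp only [map_smul, LinearMap.smul_apply, smul_eq_mul] at hle'
  nlinarith [mul_pos hε hω]

theorem apply_ellipse_of_isAlt {ω : Y →ₗ[ℝ] Y →ₗ[ℝ] ℝ} (hω : ω.IsAlt) (p q : Y) (α : ℝ) :
    ω (ellipse p q α) (ellipse p q (α + π / 2)) = ω p q := by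
  have hqp : ω q p = -ω p q := (hω.neg p q).symm
  simp only [ellipse, cos_add_pi_div_two, sin_add_pi_div_two, map_add, map_smul, map_neg,
    LinearMap.add_apply, LinearMap.smul_apply, smul_eq_mul, hω.self_eq_zero, hqp, neg_smul]
  linear_combination (ω p q) * sin_sq_add_cos_sq α

theorem ellipseInBall_inv_smul (p q : Y) :
    EllipseInBall ((‖p‖ + ‖q‖)⁻¹ • p) ((‖p‖ + ‖q‖)⁻¹ • q) := fun θ => by
  set r := (‖p‖ + ‖q‖)⁻¹
  have hr : 0 ≤ r := by positivity
  calc ‖ellipse (r • p) (r • q) θ‖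
      ≤ |cos θ| * (r * ‖p‖) + |sin θ| * (r * ‖q‖) := by
        refine (norm_add_le _ _).trans_eq ?_
        simp only [norm_smul, norm_eq_abs, abs_of_nonneg hr]
    _ ≤ 1 * (r * ‖p‖) + 1 * (r * ‖q‖) := by
        gcongr
        exacts [abs_cos_le_one θ, abs_sin_le_one θ]
    _ ≤ 1 := by
        rw [one_mul, one_mul, ← mul_add]
        exact inv_mul_le_one

theorem exists_ellipseInBall_isMax [FiniteDimensional ℝ Y] (ω : Y →ₗ[ℝ] Y →ₗ[ℝ] ℝ) {p₀ q₀ : Y}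
    (h₀ : 0 < ω p₀ q₀) : ∃ p q, EllipseInBall p q ∧ 0 < ω p q ∧
      ∀ p' q', EllipseInBall p' q' → ω p' q' ≤ ω p q := by
  have : ProperSpace Y := FiniteDimensional.proper_real Y
  let K : Set (Y × Y) := {x | EllipseInBall x.1 x.2}
  have hK : IsCompact K := by
    refine (isCompact_closedBall (0 : Y × Y) 1).of_isClosed_subset ?_ fun x hx => ?_
    · simp only [K, EllipseInBall, Set.ofPred_forall, ellipse]
      exact isClosed_iInter fun θ => isClosed_le (by fun_prop) continuous_const
    · rw [mem_closedBall_zero_iff]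
      exact max_le (by simpa using hx 0) (by simpa using hx (π / 2))
  have hcont : Continuous fun x : Y × Y => ω x.1 x.2 :=
    ω.toContinuousBilinearMap.continuous₂
  obtain ⟨⟨p, q⟩, hpq, hmax⟩ := hK.exists_isMaxOn ⟨0, fun θ => by simp [ellipse]⟩ hcont.continuousOn
  refine ⟨p, q, hpq, ?_, fun p' q' h' => hmax (a := (p', q')) h'⟩
  have hp₀ : p₀ ≠ 0 := by
    rintro rfl
    simp at h₀
  set r := (‖p₀‖ + ‖q₀‖)⁻¹
  have hr : 0 < r := by positivity
  have hle : ω (r • p₀) (r • q₀) ≤ ω p q :=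
    hmax (a := (r • p₀, r • q₀)) (ellipseInBall_inv_smul p₀ q₀)
  simp only [map_smul, LinearMap.smul_apply, smul_eq_mul] at hle
  exact (mul_pos hr (mul_pos hr h₀)).trans_le hle

theorem exists_forall_norm_ellipse_eq_one [FiniteDimensional ℝ Y]
    (h : ∀ u v : Y, ‖u‖ = 1 → ‖v‖ = 1 → ‖u + v‖ ^ 2 + ‖u - v‖ ^ 2 = 4)
    {ω : Y →ₗ[ℝ] Y →ₗ[ℝ] ℝ} (hω : ω.IsAlt) {p₀ q₀ : Y} (h₀ : 0 < ω p₀ q₀) :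
    ∃ p q : Y, ∀ θ, ‖ellipse p q θ‖ = 1 := by
  obtain ⟨p, q, hpq, hpos, hmax⟩ := exists_ellipseInBall_isMax ω h₀
  have hcontact : ∀ α, ∃ θ, ‖ellipse p q (α + θ)‖ = 1 ∧ 1 / 4 ≤ sin θ ^ 2 := fun α => by
    have hα := apply_ellipse_of_isAlt hω p q α
    simpa only [ellipse_ellipse] using
      (hpq.rotate α).exists_norm_ellipse_eq_one ω (hpos.trans_eq hα.symm)
        fun p' q' h' => (hmax p' q' h').trans_eq hα.symm
  obtain ⟨α, hα, -⟩ := hcontact 0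
  obtain ⟨β, hβ, hsin⟩ := hcontact (0 + α)
  refine ⟨p, q, hpq.norm_ellipse_eq_one_of_sin_ne_zero h hα hβ ?_⟩
  rw [add_sub_cancel_left]
  intro h0
  norm_num [h0] at hsin

theorem parallelogram_of_forall_norm_ellipse_eq_one (hY : Module.finrank ℝ Y = 2) {p q : Y}
    (hpq : ∀ θ, ‖ellipse p q θ‖ = 1) (x y : Y) :
    ‖x + y‖ ^ 2 + ‖x - y‖ ^ 2 = 2 * (‖x‖ ^ 2 + ‖y‖ ^ 2) := by
  have hnorm := norm_smul_add_smul_sq_of_norm_ellipse hpq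
  have hli : LinearIndependent ℝ ![p, q] := LinearIndependent.pair_iff.2 fun s t hst => by
    have hsq := hnorm s t
    rw [hst, norm_zero] at hsq
    constructor <;> nlinarith
  have hspan : ∀ v : Y, ∃ s t : ℝ, s • p + t • q = v := fun v => by
    have : FiniteDimensional ℝ Y := .of_finrank_pos (by lia)
    have htop := hli.span_eq_top_of_card_eq_finrank' (by simp [hY])
    rw [Matrix.range_cons_cons_empty] at htop
    exact Submodule.mem_span_pair.1 (htop ▸ Submodule.mem_top)
  obtain ⟨s, t, rfl⟩ := hspan x
  obtain ⟨s', t', rfl⟩ := hspan y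
  rw [show s • p + t • q + (s' • p + t' • q) = (s + s') • p + (t + t') • q by module,
    show s • p + t • q - (s' • p + t' • q) = (s - s') • p + (t - t') • q by module]
  simp only [hnorm]
  ring

theorem parallelogram_of_linearIndependent
    (h : ∀ u v : Y, ‖u‖ = 1 → ‖v‖ = 1 → ‖u + v‖ ^ 2 + ‖u - v‖ ^ 2 = 4) {x y : Y}
    (hxy : LinearIndependent ℝ ![x, y]) :
    ‖x + y‖ ^ 2 + ‖x - y‖ ^ 2 = 2 * (‖x‖ ^ 2 + ‖y‖ ^ 2) := by
  let b := Module.Basis.span hxy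
  have hfinrank : Module.finrank ℝ (Submodule.span ℝ (Set.range ![x, y])) = 2 := by
    rw [finrank_span_eq_card hxy, Fintype.card_fin]
  have : FiniteDimensional ℝ (Submodule.span ℝ (Set.range ![x, y])) := .of_basis b
  let ω := (b.coord 0).smulRight (b.coord 1) - (b.coord 1).smulRight (b.coord 0)
  have hω : ω.IsAlt := fun v => by
    simp only [ω, LinearMap.sub_apply, LinearMap.smulRight_apply, LinearMap.smul_apply, smul_eq_mul]
    ring
  obtain ⟨p, q, hpq⟩ := exists_forall_norm_ellipse_eq_one
    (Y := Submodule.span ℝ (Set.range ![x, y])) (fun u v hu hv => h u v hu hv) hω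
    (p₀ := b 0) (q₀ := b 1) (by simp [ω])
  simpa [b, Module.Basis.span_apply] using
    parallelogram_of_forall_norm_ellipse_eq_one hfinrank hpq (b 0) (b 1)

/-- Day's theorem: the parallelogram law for rhombi characterizes inner product norms. -/
theorem parallelogram_of_forall_norm_eq_one
    (h : ∀ u v : Y, ‖u‖ = 1 → ‖v‖ = 1 → ‖u + v‖ ^ 2 + ‖u - v‖ ^ 2 = 4) (x y : Y) :
    ‖x + y‖ ^ 2 + ‖x - y‖ ^ 2 = 2 * (‖x‖ ^ 2 + ‖y‖ ^ 2) := by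
  by_cases hxy : LinearIndependent ℝ ![x, y]
  · exact parallelogram_of_linearIndependent h hxy
  rcases eq_or_ne x 0 with rfl | hx
  · rw [zero_add, zero_sub, norm_neg, norm_zero]
    ring
  obtain ⟨a, rfl⟩ : ∃ a : ℝ, a • x = y := by
    simpa [LinearIndependent.pair_iff' hx] using hxy
  rw [show x + a • x = (1 + a) • x by module, show x - a • x = (1 - a) • x by module]
  simp only [norm_smul, mul_pow, norm_eq_abs, sq_abs]
  ring

end Day

section Dual

variable {Y : Type*} [NormedAddCommGroup Y] [NormedSpace ℝ Y]

theorem apply_le_norm_of_opNorm_le_one {f : StrongDual ℝ Y} (hf : ‖f‖ ≤ 1) (y : Y) : f y ≤ ‖y‖ :=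
  (le_abs_self _).trans ((f.le_of_opNorm_le hf y).trans_eq (one_mul _))

theorem exists_dual_eq_one_of_norm_add_eq_two {u v : Y} (hu : ‖u‖ = 1) (hv : ‖v‖ = 1)
    (h : ‖u + v‖ = 2) : ∃ f : StrongDual ℝ Y, ‖f‖ ≤ 1 ∧ f u = 1 ∧ f v = 1 := by
  obtain ⟨f, hf, hfuv⟩ := exists_dual_vector'' ℝ (u + v)
  simp only [map_add, h, RCLike.ofReal_real_eq_id, id_eq] at hfuv
  have hfu := apply_le_norm_of_opNorm_le_one hf u
  have hfv := apply_le_norm_of_opNorm_le_one hf v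
  exact ⟨f, hf, by linarith, by linarith⟩

theorem norm_add_eq_two_of_dual_eq_one {u v : Y} (hu : ‖u‖ = 1) (hv : ‖v‖ = 1)
    {f : StrongDual ℝ Y} (hf : ‖f‖ ≤ 1) (hfu : f u = 1) (hfv : f v = 1) : ‖u + v‖ = 2 := by
  have hle := apply_le_norm_of_opNorm_le_one hf (u + v)
  rw [map_add, hfu, hfv] at hle
  linarith [norm_add_le u v]

theorem exists_dual_eq_one_of_convex {C : Set Y} (hC : Convex ℝ C)
    (hC1 : ∀ y ∈ C, ‖y‖ = 1) : ∃ f : StrongDual ℝ Y, ‖f‖ ≤ 1 ∧ ∀ y ∈ C, f y = 1 := by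
  have hdisj : Disjoint (Metric.ball (0 : Y) 1) C := Set.disjoint_left.2 fun y hy hyC => by
    simp [hC1 y hyC] at hy
  obtain ⟨f, r, hfr, hrf⟩ :=
    geometric_hahn_banach_open (convex_ball 0 1) Metric.isOpen_ball hC hdisj
  have hr : 0 < r := by simpa using hfr 0 (by simp)
  have hle : ∀ y, r⁻¹ * f y ≤ ‖y‖ := fun y => by
    by_contra! hlt
    have hpos : 0 < r⁻¹ * f y := (norm_nonneg y).trans_lt hlt
    have hball : (r⁻¹ * f y)⁻¹ • y ∈ Metric.ball (0 : Y) 1 := by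
      rw [mem_ball_zero_iff, norm_smul, norm_inv, Real.norm_of_nonneg hpos.le]
      exact (inv_mul_lt_one₀ hpos).2 hlt
    have hfy : f y ≠ 0 := fun h0 => by simp [h0] at hpos
    have hlt' := hfr _ hball
    rw [map_smul, smul_eq_mul, mul_inv, inv_inv, mul_assoc, inv_mul_cancel₀ hfy, mul_one] at hlt'
    exact lt_irrefl r hlt'
  have hnorm : ‖r⁻¹ • f‖ ≤ 1 := by
    refine ContinuousLinearMap.opNorm_le_bound _ zero_le_one fun y => ?_
    have hneg := hle (-y)
    rw [map_neg, norm_neg] at hneg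
    rw [one_mul, Real.norm_eq_abs, abs_le]
    exact ⟨by simpa using neg_le.1 (by simpa using hneg), hle y⟩
  refine ⟨r⁻¹ • f, hnorm, fun y hy => le_antisymm ?_ ((le_inv_mul_iff₀ hr).2 ?_)⟩
  · exact (apply_le_norm_of_opNorm_le_one hnorm y).trans_eq (hC1 y hy)
  · simpa using hrf y hy

end Dual

section Inner

open scoped RealInnerProductSpace

variable {E : Type*} [NormedAddCommGroup E] [InnerProductSpace ℝ E]

theorem eq_neg_of_norm_sub_eq_two {a b : E} (ha : ‖a‖ ≤ 1) (hb : ‖b‖ ≤ 1) (h : ‖a - b‖ = 2) :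
    a = -b := by
  have hpar := parallelogram_law_with_norm ℝ a b
  have hadd : ‖a + b‖ = 0 := by nlinarith [norm_nonneg a, norm_nonneg b, norm_nonneg (a + b)]
  exact eq_neg_of_add_eq_zero_left (norm_eq_zero.1 hadd)

theorem eq_zero_of_forall_inner_eq_zero {v : E} (h : ∀ u : E, ‖u‖ = 1 → ⟪u, v⟫ = 0) : v = 0 := by
  by_contra hv
  have hinner := h (‖v‖⁻¹ • v) (norm_smul_inv_norm hv)
  rw [real_inner_smul_left, mul_eq_zero, inv_eq_zero, norm_eq_zero, inner_self_eq_zero] at hinner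
  exact hv (or_self_iff.1 hinner)

theorem norm_sub_le_one_sub_inner {z : E} (hz : ‖z‖ = 1) (w : E) :
    ‖z - w‖ ≤ 1 - ⟪z, w⟫ + ‖w‖ ^ 2 / 2 := by
  have hsq := norm_sub_sq_real z w
  rw [hz] at hsq
  nlinarith [sq_nonneg (‖z - w‖ - 1)]

theorem norm_sub_smul_sq_le {v w : E} (hv : ‖v‖ = 1) {r : ℝ} (hr : 0 ≤ r) (hw : ‖w‖ ≤ r)
    (h : r - r ^ 2 / 2 ≤ ⟪v, w⟫) : ‖w - r • v‖ ^ 2 ≤ r ^ 3 := by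
  rw [norm_sub_sq_real, norm_smul, Real.norm_of_nonneg hr, hv, mul_one, real_inner_smul_right,
    real_inner_comm]
  nlinarith [pow_le_pow_left₀ (norm_nonneg w) hw 2, mul_le_mul_of_nonneg_left h hr]

theorem exists_norm_eq_one_and_eq_norm_smul [Nontrivial E] (z : E) :
    ∃ u : E, ‖u‖ = 1 ∧ z = ‖z‖ • u := by
  rcases eq_or_ne z 0 with rfl | hz
  · obtain ⟨u, hu⟩ := exists_norm_eq E zero_le_one
    exact ⟨u, hu, by simp⟩
  · exact ⟨‖z‖⁻¹ • z, norm_smul_inv_norm hz, (smul_inv_smul₀ (norm_ne_zero_iff.2 hz) z).symm⟩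

end Inner

section SphereIsometry

variable {X Y : Type*} [NormedAddCommGroup X] [NormedAddCommGroup Y]

/-- `Δ` restricts to an isometry from the unit sphere of `X` onto the unit sphere of `Y`; its values
off the unit sphere are irrelevant. -/
structure IsSphereIsometry (Δ : X → Y) : Prop where
  norm_map : ∀ x, ‖x‖ = 1 → ‖Δ x‖ = 1
  exists_map_eq : ∀ y, ‖y‖ = 1 → ∃ x, ‖x‖ = 1 ∧ Δ x = y
  norm_map_sub : ∀ x y, ‖x‖ = 1 → ‖y‖ = 1 → ‖Δ x - Δ y‖ = ‖x - y‖

namespace IsSphereIsometry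

variable {Δ : X → Y}

theorem exists_map_eq_neg (hΔ : IsSphereIsometry Δ) {x : X} (hx : ‖x‖ = 1) :
    ∃ w, ‖w‖ = 1 ∧ Δ w = -Δ x :=
  hΔ.exists_map_eq (-Δ x) (by rw [norm_neg, hΔ.norm_map x hx])

theorem norm_map_add_of_map_eq_neg (hΔ : IsSphereIsometry Δ) {x y w : X} (hx : ‖x‖ = 1)
    (hw : ‖w‖ = 1) (hwy : Δ w = -Δ y) : ‖Δ x + Δ y‖ = ‖x - w‖ := by
  rw [← hΔ.norm_map_sub x w hx hw, hwy, sub_neg_eq_add]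

theorem norm_sub_eq_two_of_map_eq_neg [NormedSpace ℝ Y] (hΔ : IsSphereIsometry Δ) {x w : X}
    (hx : ‖x‖ = 1) (hw : ‖w‖ = 1) (hwx : Δ w = -Δ x) : ‖x - w‖ = 2 := by
  rw [← hΔ.norm_map_add_of_map_eq_neg hx hw hwx, ← two_smul ℝ, norm_smul, hΔ.norm_map x hx]
  norm_num

end IsSphereIsometry

variable [NormedSpace ℝ X] [NormedSpace ℝ Y]

/-- The extension of a map on the unit sphere which commutes with nonnegative scalars. -/
noncomputable def homogeneousExtension (Δ : X → Y) (x : X) : Y := ‖x‖ • Δ (‖x‖⁻¹ • x)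

theorem homogeneousExtension_of_norm_eq_one (Δ : X → Y) {x : X} (hx : ‖x‖ = 1) :
    homogeneousExtension Δ x = Δ x := by
  simp [homogeneousExtension, hx]

theorem map_homogeneousExtension {Δ : X → Y} {φ : Y →ₗ[ℝ] ℝ} {ψ : X →ₗ[ℝ] ℝ}
    (h : ∀ x, ‖x‖ = 1 → φ (Δ x) = ψ x) (x : X) : φ (homogeneousExtension Δ x) = ψ x := by
  rcases eq_or_ne x 0 with rfl | hx
  · simp [homogeneousExtension]
  · have hx' : ‖‖x‖⁻¹ • x‖ = 1 := norm_smul_inv_norm (𝕜 := ℝ) hx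
    rw [homogeneousExtension, map_smul, h _ hx', ← map_smul,
      smul_inv_smul₀ (norm_ne_zero_iff.2 hx)]

namespace IsSphereIsometry

variable {Δ : X → Y}

theorem norm_homogeneousExtension (hΔ : IsSphereIsometry Δ) (x : X) :
    ‖homogeneousExtension Δ x‖ = ‖x‖ := by
  rcases eq_or_ne x 0 with rfl | hx
  · simp [homogeneousExtension]
  · have hx' : ‖‖x‖⁻¹ • x‖ = 1 := norm_smul_inv_norm (𝕜 := ℝ) hx
    rw [homogeneousExtension, norm_smul, norm_norm, hΔ.norm_map _ hx', mul_one]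

theorem homogeneousExtension_surjective (hΔ : IsSphereIsometry Δ) :
    Function.Surjective (homogeneousExtension Δ) := fun y => by
  rcases eq_or_ne y 0 with rfl | hy
  · exact ⟨0, by simp [homogeneousExtension]⟩
  · obtain ⟨x, hx, hxy⟩ := hΔ.exists_map_eq _ (norm_smul_inv_norm (𝕜 := ℝ) hy)
    have hy' : ‖y‖ ≠ 0 := norm_ne_zero_iff.2 hy
    refine ⟨‖y‖ • x, ?_⟩
    rw [homogeneousExtension, norm_smul, norm_norm, hx, mul_one, inv_smul_smul₀ hy', hxy]
    exact smul_inv_smul₀ hy' y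

theorem exists_linearIsometryEquiv (hΔ : IsSphereIsometry Δ) {ι : Type*} {φ : ι → Y →ₗ[ℝ] ℝ}
    {ψ : ι → X →ₗ[ℝ] ℝ} (hφψ : ∀ i x, ‖x‖ = 1 → φ i (Δ x) = ψ i x)
    (hψ : ∀ x, (∀ i, ψ i x = 0) → x = 0) :
    ∃ T : X ≃ₗᵢ[ℝ] Y, ∀ x, ‖x‖ = 1 → T x = Δ x := by
  have hφ : ∀ y₁ y₂ : Y, (∀ i, φ i y₁ = φ i y₂) → y₁ = y₂ := fun y₁ y₂ h => by
    obtain ⟨x, hx⟩ := hΔ.homogeneousExtension_surjective (y₁ - y₂)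
    have hx0 : x = 0 := hψ x fun i => by
      rw [← map_homogeneousExtension (hφψ i), hx, map_sub, h, sub_self]
    rw [← sub_eq_zero, ← norm_eq_zero, ← hx, hΔ.norm_homogeneousExtension, hx0, norm_zero]
  let T : X →ₗᵢ[ℝ] Y :=
    { toFun := homogeneousExtension Δ
      map_add' := fun x y => hφ _ _ fun i => by
        simp only [map_add, map_homogeneousExtension (hφψ i)]
      map_smul' := fun r x => hφ _ _ fun i => by
        simp only [map_smul, map_homogeneousExtension (hφψ i), RingHom.id_apply]
      norm_map' := hΔ.norm_homogeneousExtension }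
  exact ⟨.ofSurjective T hΔ.homogeneousExtension_surjective,
    fun x hx => homogeneousExtension_of_norm_eq_one Δ hx⟩

end IsSphereIsometry

end SphereIsometry

namespace IsSphereIsometry

variable {E Y : Type*} [NormedAddCommGroup E] [InnerProductSpace ℝ E] [NormedAddCommGroup Y]
  [NormedSpace ℝ Y] {Δ : E → Y}

theorem map_neg_of_innerProductSpace (hΔ : IsSphereIsometry Δ) {x : E} (hx : ‖x‖ = 1) :
    Δ (-x) = -Δ x := by
  obtain ⟨w, hw, hwx⟩ := hΔ.exists_map_eq_neg hx
  have hxw := eq_neg_of_norm_sub_eq_two hx.le hw.le (hΔ.norm_sub_eq_two_of_map_eq_neg hx hw hwx)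
  rw [hxw, neg_neg, hwx, hxw]

theorem parallelogram_of_innerProductSpace (hΔ : IsSphereIsometry Δ) (u v : Y) :
    ‖u + v‖ ^ 2 + ‖u - v‖ ^ 2 = 2 * (‖u‖ ^ 2 + ‖v‖ ^ 2) := by
  refine parallelogram_of_forall_norm_eq_one (fun u v hu hv => ?_) u v
  obtain ⟨x, hx, rfl⟩ := hΔ.exists_map_eq u hu
  obtain ⟨y, hy, rfl⟩ := hΔ.exists_map_eq v hv
  rw [hΔ.norm_map_add_of_map_eq_neg hx (by rwa [norm_neg]) (hΔ.map_neg_of_innerProductSpace hy),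
    hΔ.norm_map_sub x y hx hy, sub_neg_eq_add]
  have hpar := parallelogram_law_with_norm ℝ x y
  rw [hx, hy] at hpar
  linarith

theorem exists_linearIsometryEquiv_of_innerProductSpace (hΔ : IsSphereIsometry Δ) :
    ∃ T : E ≃ₗᵢ[ℝ] Y, ∀ x, ‖x‖ = 1 → T x = Δ x := by
  let _ : InnerProductSpace ℝ Y := InnerProductSpace.ofNorm (𝕜 := ℝ) fun u v => by
    simpa only [sq] using hΔ.parallelogram_of_innerProductSpace u v
  refine hΔ.exists_linearIsometryEquiv (ι := {u : E // ‖u‖ = 1})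
    (φ := fun u => innerₛₗ ℝ (Δ u)) (ψ := fun u => innerₛₗ ℝ (u : E)) (fun u x hx => ?_)
    fun x hx => eq_zero_of_forall_inner_eq_zero fun u hu => hx ⟨u, hu⟩
  have hu := u.2
  simp only [innerₛₗ_apply_apply,
    real_inner_eq_norm_mul_self_add_norm_mul_self_sub_norm_sub_mul_self_div_two,
    hΔ.norm_map_sub _ x hu hx, hΔ.norm_map _ hu, hΔ.norm_map x hx, hu, hx]

end IsSphereIsometry

section FamilySup

variable {Γ : Type*} {E : Γ → Type*} [∀ γ, NormedAddCommGroup (E γ)]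

/-- The points of the unit sphere of `ℓ_∞` with value `z` at `γ`; when `‖z‖ = 1` and
`E γ` is strictly convex, a maximal face of the unit ball. -/
def face (γ : Γ) (z : E γ) : Set (lp E ⊤) := {x | ‖x‖ = 1 ∧ x γ = z}

open Classical in
/-- The element `x` of `ℓ_∞` with its value at `γ` replaced by `z`. -/
noncomputable def updateAt (x : lp E ⊤) (γ : Γ) (z : E γ) : lp E ⊤ := x + lp.single ⊤ γ (z - x γ)

@[simp]
theorem updateAt_self (x : lp E ⊤) (γ : Γ) (z : E γ) : updateAt x γ z γ = z := by
  simp [updateAt]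

theorem updateAt_of_ne (x : lp E ⊤) {γ δ : Γ} (h : δ ≠ γ) (z : E γ) : updateAt x γ z δ = x δ := by
  simp [updateAt, h]

/-- The element of `ℓ_∞` with value `z` at `γ` and `0` elsewhere. -/
noncomputable def peak (γ : Γ) (z : E γ) : lp E ⊤ := updateAt 0 γ z

theorem linfty_norm_apply_le (x : lp E ⊤) (γ : Γ) : ‖x γ‖ ≤ ‖x‖ :=
  lp.norm_apply_le_norm ENNReal.top_ne_zero x γ

theorem mem_face_of_forall_norm_le {x : lp E ⊤} (hx : ∀ γ, ‖x γ‖ ≤ 1) {γ : Γ} {z : E γ}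
    (hz : ‖z‖ = 1) (h : x γ = z) : x ∈ face γ z :=
  ⟨le_antisymm (lp.norm_le_of_forall_le zero_le_one hx) (hz ▸ h ▸ linfty_norm_apply_le x γ), h⟩

theorem norm_updateAt_apply_le {x : lp E ⊤} (hx : ‖x‖ ≤ 1) (γ : Γ) {z : E γ} (hz : ‖z‖ ≤ 1)
    (δ : Γ) : ‖updateAt x γ z δ‖ ≤ 1 := by
  rcases eq_or_ne δ γ with rfl | h
  · rwa [updateAt_self]
  · rw [updateAt_of_ne x h]
    exact (linfty_norm_apply_le x δ).trans hx

theorem updateAt_mem_face {x : lp E ⊤} (hx : ‖x‖ ≤ 1) {γ : Γ} {z : E γ} (hz : ‖z‖ = 1) :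
    updateAt x γ z ∈ face γ z :=
  mem_face_of_forall_norm_le (norm_updateAt_apply_le hx γ hz.le) hz (updateAt_self x γ z)

theorem updateAt_mem_face_of_ne {δ : Γ} {u : E δ} (hu : ‖u‖ = 1) {x : lp E ⊤} (hx : x ∈ face δ u)
    {γ : Γ} (hδ : δ ≠ γ) {z : E γ} (hz : ‖z‖ ≤ 1) : updateAt x γ z ∈ face δ u :=
  mem_face_of_forall_norm_le (norm_updateAt_apply_le hx.1.le γ hz) hu
    ((updateAt_of_ne x hδ z).trans hx.2)

theorem peak_mem_face {γ : Γ} {z : E γ} (hz : ‖z‖ = 1) : peak γ z ∈ face γ z :=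
  updateAt_mem_face (by simp) hz

theorem norm_updateAt_sub_le (x : lp E ⊤) (γ : Γ) (z : E γ) :
    ‖updateAt x γ z - x‖ ≤ ‖z - x γ‖ := by
  refine lp.norm_le_of_forall_le (norm_nonneg _) fun δ => ?_
  rw [lp.coeFn_sub, Pi.sub_apply]
  rcases eq_or_ne δ γ with rfl | h
  · rw [updateAt_self]
  · simp [updateAt_of_ne x h]

theorem norm_peak_sub_le {x : lp E ⊤} (hx : ‖x‖ ≤ 1) (γ : Γ) (z : E γ) :
    ‖peak γ z - x‖ ≤ max 1 ‖z - x γ‖ := by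
  refine lp.norm_le_of_forall_le (by positivity) fun δ => ?_
  rw [lp.coeFn_sub, Pi.sub_apply]
  rcases eq_or_ne δ γ with rfl | h
  · simp [peak]
  · simpa [peak, updateAt_of_ne _ h] using Or.inl ((linfty_norm_apply_le x δ).trans hx)

theorem norm_sub_eq_two_of_mem_face [∀ γ, NormedSpace ℝ (E γ)] {γ : Γ} {z : E γ} (hz : ‖z‖ = 1)
    {x y : lp E ⊤} (hx : x ∈ face γ z) (hy : y ∈ face γ (-z)) : ‖x - y‖ = 2 := by
  refine le_antisymm ((norm_sub_le x y).trans (by rw [hx.1, hy.1]; norm_num)) ?_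
  have hγ := linfty_norm_apply_le (x - y) γ
  rw [lp.coeFn_sub, Pi.sub_apply, hx.2, hy.2, sub_neg_eq_add, ← two_smul ℝ z, norm_smul, hz] at hγ
  simpa using hγ

variable {Y : Type*} [NormedAddCommGroup Y] [NormedSpace ℝ Y]

/-- The functional `φ` on `Y` supports the unit ball along the image under `Δ` of
the face `face γ z`. -/
structure Supports (Δ : lp E ⊤ → Y) (γ : Γ) (z : E γ) (φ : StrongDual ℝ Y) : Prop where
  norm_le_one : ‖φ‖ ≤ 1
  map_eq_one : ∀ x ∈ face γ z, φ (Δ x) = 1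

namespace Supports

variable {Δ : lp E ⊤ → Y} {γ : Γ} {z : E γ} {φ : StrongDual ℝ Y} {x y : lp E ⊤}

theorem map_sub_map_le (hφ : Supports Δ γ z φ) (hΔ : IsSphereIsometry Δ) (hx : ‖x‖ = 1)
    (hy : ‖y‖ = 1) : φ (Δ x) - φ (Δ y) ≤ ‖x - y‖ := by
  rw [← map_sub, ← hΔ.norm_map_sub x y hx hy]
  exact apply_le_norm_of_opNorm_le_one hφ.norm_le_one _

theorem abs_map_sub_map_le (hφ : Supports Δ γ z φ) (hΔ : IsSphereIsometry Δ) (hx : ‖x‖ = 1)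
    (hy : ‖y‖ = 1) : |φ (Δ x) - φ (Δ y)| ≤ ‖x - y‖ :=
  abs_sub_le_iff.2 ⟨hφ.map_sub_map_le hΔ hx hy, norm_sub_rev x y ▸ hφ.map_sub_map_le hΔ hy hx⟩

theorem one_sub_norm_le_map (hφ : Supports Δ γ z φ) (hΔ : IsSphereIsometry Δ) (hz : ‖z‖ = 1)
    (hx : ‖x‖ = 1) : 1 - ‖z - x γ‖ ≤ φ (Δ x) := by
  have hu := updateAt_mem_face hx.le hz
  have hle := (hφ.map_sub_map_le hΔ hu.1 hx).trans (norm_updateAt_sub_le x γ z)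
  rw [hφ.map_eq_one _ hu] at hle
  linarith

end Supports

end FamilySup

section FamilyInner

open scoped RealInnerProductSpace

variable {Γ : Type*} {E : Γ → Type*} [∀ γ, NormedAddCommGroup (E γ)]
  [∀ γ, InnerProductSpace ℝ (E γ)] {Y : Type*} [NormedAddCommGroup Y] [NormedSpace ℝ Y]

theorem mem_face_neg_of_norm_peak_sub {γ : Γ} {z : E γ} (hz : ‖z‖ = 1) {x : lp E ⊤} (hx : ‖x‖ = 1)
    (h : ‖peak γ z - x‖ = 2) : x ∈ face γ (-z) := by
  have hxγ : ‖x γ‖ ≤ 1 := (linfty_norm_apply_le x γ).trans hx.le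
  have hle : 2 ≤ ‖z - x γ‖ := by simpa [h] using norm_peak_sub_le hx.le γ z
  have hnorm : ‖z - x γ‖ = 2 := by linarith [norm_sub_le z (x γ)]
  exact ⟨hx, (neg_eq_iff_eq_neg.2 (eq_neg_of_norm_sub_eq_two hz.le hxγ hnorm)).symm⟩

namespace IsSphereIsometry

variable {Δ : lp E ⊤ → Y} {γ : Γ} {z : E γ} {x y w : lp E ⊤}

theorem norm_map_add_map_peak (hΔ : IsSphereIsometry Δ) (hz : ‖z‖ = 1) (hx : x ∈ face γ z) :
    ‖Δ x + Δ (peak γ z)‖ = 2 := by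
  have hp := (peak_mem_face hz).1
  obtain ⟨w, hw, hwp⟩ := hΔ.exists_map_eq_neg hp
  rw [hΔ.norm_map_add_of_map_eq_neg hx.1 hw hwp]
  refine norm_sub_eq_two_of_mem_face hz hx (mem_face_neg_of_norm_peak_sub hz hw ?_)
  exact hΔ.norm_sub_eq_two_of_map_eq_neg hp hw hwp

theorem mem_face_neg_of_map_eq_neg (hΔ : IsSphereIsometry Δ) (hz : ‖z‖ = 1) (hx : x ∈ face γ z)
    (hw : ‖w‖ = 1) (hwx : Δ w = -Δ x) : w ∈ face γ (-z) := by
  refine mem_face_neg_of_norm_peak_sub hz hw ?_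
  rw [← hΔ.norm_map_add_of_map_eq_neg (peak_mem_face hz).1 hw hwx, add_comm,
    hΔ.norm_map_add_map_peak hz hx]

theorem norm_map_add_map (hΔ : IsSphereIsometry Δ) (hz : ‖z‖ = 1) (hx : x ∈ face γ z)
    (hy : y ∈ face γ z) : ‖Δ x + Δ y‖ = 2 := by
  obtain ⟨w, hw, hwy⟩ := hΔ.exists_map_eq_neg hy.1
  rw [hΔ.norm_map_add_of_map_eq_neg hx.1 hw hwy,
    norm_sub_eq_two_of_mem_face hz hx (hΔ.mem_face_neg_of_map_eq_neg hz hy hw hwy)]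

theorem mem_face_of_norm_map_add_map_peak (hΔ : IsSphereIsometry Δ) (hz : ‖z‖ = 1) (hx : ‖x‖ = 1)
    (h : ‖Δ x + Δ (peak γ z)‖ = 2) : x ∈ face γ z := by
  obtain ⟨w, hw, hwx⟩ := hΔ.exists_map_eq_neg hx
  have hwface : w ∈ face γ (-z) := mem_face_neg_of_norm_peak_sub hz hw <| by
    rw [← hΔ.norm_map_add_of_map_eq_neg (peak_mem_face hz).1 hw hwx, add_comm, h]
  simpa using hΔ.mem_face_neg_of_map_eq_neg (by rwa [norm_neg]) hwface hx (by rw [hwx, neg_neg])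

theorem exists_dual_eq_one_on_pair (hΔ : IsSphereIsometry Δ) (hz : ‖z‖ = 1) (hx : x ∈ face γ z)
    (hy : y ∈ face γ z) : ∃ f : StrongDual ℝ Y,
      ‖f‖ ≤ 1 ∧ f (Δ x) = 1 ∧ f (Δ y) = 1 ∧ f (Δ (peak γ z)) = 1 := by
  have hp := peak_mem_face hz
  obtain ⟨f, hf, hfx, hfp⟩ := exists_dual_eq_one_of_norm_add_eq_two (hΔ.norm_map x hx.1)
    (hΔ.norm_map _ hp.1) (hΔ.norm_map_add_map_peak hz hx)
  obtain ⟨m, hm, hmxp⟩ := hΔ.exists_map_eq ((1 / 2 : ℝ) • (Δ x + Δ (peak γ z))) <| by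
    rw [norm_smul, hΔ.norm_map_add_map_peak hz hx]
    norm_num
  have hmface : m ∈ face γ z := by
    refine hΔ.mem_face_of_norm_map_add_map_peak hz hm ?_
    refine norm_add_eq_two_of_dual_eq_one (hΔ.norm_map m hm) (hΔ.norm_map _ hp.1) hf ?_ hfp
    rw [hmxp, map_smul, map_add, hfx, hfp]
    norm_num
  obtain ⟨g, hg, hgm, hgy⟩ := exists_dual_eq_one_of_norm_add_eq_two (hΔ.norm_map m hm)
    (hΔ.norm_map y hy.1) (hΔ.norm_map_add_map hz hmface hy)
  have hgx := (apply_le_norm_of_opNorm_le_one hg (Δ x)).trans_eq (hΔ.norm_map x hx.1)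
  have hgp := (apply_le_norm_of_opNorm_le_one hg (Δ (peak γ z))).trans_eq (hΔ.norm_map _ hp.1)
  rw [hmxp, map_smul, map_add, smul_eq_mul] at hgm
  exact ⟨g, hg, by linarith, hgy, by linarith⟩

theorem convex_image_face (hΔ : IsSphereIsometry Δ) (hz : ‖z‖ = 1) :
    Convex ℝ (Δ '' face γ z) := by
  rintro _ ⟨x, hx, rfl⟩ _ ⟨y, hy, rfl⟩ α β hα hβ hαβ
  obtain ⟨f, hf, hfx, hfy, hfp⟩ := hΔ.exists_dual_eq_one_on_pair hz hx hy
  have hfxy : f (α • Δ x + β • Δ y) = 1 := by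
    simpa only [map_add, map_smul, hfx, hfy, smul_eq_mul, mul_one] using hαβ
  have hnorm : ‖α • Δ x + β • Δ y‖ = 1 := by
    refine le_antisymm ?_ (hfxy ▸ apply_le_norm_of_opNorm_le_one hf _)
    refine (norm_add_le _ _).trans_eq ?_
    rw [norm_smul, norm_smul, hΔ.norm_map x hx.1, hΔ.norm_map y hy.1, Real.norm_of_nonneg hα,
      Real.norm_of_nonneg hβ, mul_one, mul_one, hαβ]
  obtain ⟨w, hw, hwxy⟩ := hΔ.exists_map_eq _ hnorm
  have hp := hΔ.norm_map _ (peak_mem_face hz).1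
  refine ⟨w, hΔ.mem_face_of_norm_map_add_map_peak hz hw ?_, hwxy⟩
  exact norm_add_eq_two_of_dual_eq_one (hΔ.norm_map w hw) hp hf (hwxy ▸ hfxy) hfp

end IsSphereIsometry

theorem IsSphereIsometry.exists_supports {Δ : lp E ⊤ → Y} (hΔ : IsSphereIsometry Δ) {γ : Γ}
    {z : E γ} (hz : ‖z‖ = 1) : ∃ φ, Supports Δ γ z φ := by
  obtain ⟨φ, hφ, hφ1⟩ := exists_dual_eq_one_of_convex (hΔ.convex_image_face hz) <| by
    rintro _ ⟨x, hx, rfl⟩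
    exact hΔ.norm_map x hx.1
  exact ⟨φ, hφ, fun x hx => hφ1 _ ⟨x, hx, rfl⟩⟩

namespace Supports

variable {Δ : lp E ⊤ → Y} {γ : Γ} {z : E γ} {φ : StrongDual ℝ Y} {x : lp E ⊤}

theorem neg (hφ : Supports Δ γ z φ) (hΔ : IsSphereIsometry Δ) (hz : ‖z‖ = 1) :
    Supports Δ γ (-z) (-φ) where
  norm_le_one := (norm_neg φ).trans_le hφ.norm_le_one
  map_eq_one x hx := by
    obtain ⟨w, hw, hwx⟩ := hΔ.exists_map_eq_neg hx.1
    have hwface := hΔ.mem_face_neg_of_map_eq_neg (by rwa [norm_neg]) hx hw hwx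
    rw [neg_neg] at hwface
    simpa [hwx] using hφ.map_eq_one w hwface

theorem map_le_norm_sub_one (hφ : Supports Δ γ z φ) (hΔ : IsSphereIsometry Δ) (hz : ‖z‖ = 1)
    (hx : ‖x‖ = 1) : φ (Δ x) ≤ ‖z + x γ‖ - 1 := by
  have hle := (hφ.neg hΔ hz).one_sub_norm_le_map hΔ (by rwa [norm_neg]) hx
  rw [← neg_add', norm_neg, neg_apply] at hle
  linarith

theorem map_eq_of_apply_eq_smul (hφ : Supports Δ γ z φ) (hΔ : IsSphereIsometry Δ) (hz : ‖z‖ = 1)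
    (hx : ‖x‖ = 1) {r : ℝ} (hxr : x γ = r • z) : φ (Δ x) = r := by
  have hr : |r| ≤ 1 := by simpa [hxr, norm_smul, hz, hx] using linfty_norm_apply_le x γ
  obtain ⟨hr₁, hr₂⟩ := abs_le.1 hr
  have hge := hφ.one_sub_norm_le_map hΔ hz hx
  have hle := hφ.map_le_norm_sub_one hΔ hz hx
  rw [hxr, show z - r • z = (1 - r) • z by module, norm_smul, hz,
    Real.norm_of_nonneg (by linarith)] at hge
  rw [hxr, show z + r • z = (1 + r) • z by module, norm_smul, hz,
    Real.norm_of_nonneg (by linarith)] at hle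
  linarith

theorem abs_map_sub_inner_le (hφ : Supports Δ γ z φ) (hΔ : IsSphereIsometry Δ) (hz : ‖z‖ = 1)
    (hx : ‖x‖ = 1) : |φ (Δ x) - ⟪z, x γ⟫| ≤ ‖x γ‖ ^ 2 / 2 := by
  have hge := hφ.one_sub_norm_le_map hΔ hz hx
  have hle := hφ.map_le_norm_sub_one hΔ hz hx
  have hsub := norm_sub_le_one_sub_inner hz (x γ)
  have hadd := norm_sub_le_one_sub_inner hz (-x γ)
  rw [sub_neg_eq_add, inner_neg_right, norm_neg] at hadd
  exact abs_sub_le_iff.2 ⟨by linarith, by linarith⟩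

theorem abs_map_le_norm_apply (hφ : Supports Δ γ z φ) (hΔ : IsSphereIsometry Δ) (hz : ‖z‖ = 1)
    {δ : Γ} (hδ : δ ≠ γ) {u : E δ} (hu : ‖u‖ = 1) (hx : x ∈ face δ u) : |φ (Δ x)| ≤ ‖x γ‖ := by
  have hc : updateAt x γ 0 ∈ face δ u := updateAt_mem_face_of_ne hu hx hδ (by simp)
  have hφc : φ (Δ (updateAt x γ 0)) = 0 :=
    hφ.map_eq_of_apply_eq_smul hΔ hz hc.1 (by rw [updateAt_self, zero_smul])
  have hle := (hφ.abs_map_sub_map_le hΔ hc.1 hx.1).trans (norm_updateAt_sub_le x γ 0)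
  rwa [hφc, zero_sub, abs_neg, zero_sub, norm_neg] at hle

end Supports

namespace IsSphereIsometry

variable {Δ : lp E ⊤ → Y} {γ δ : Γ} {u : E δ} {x y : lp E ⊤}

/- The second-order error in `Supports.abs_map_sub_inner_le` is beaten by moving along the segment
joining `Δ x` to the image of `updateAt x γ 0`, which shrinks the value at `γ` by a factor `ε`. -/
theorem exists_map_eq_mul_map (hΔ : IsSphereIsometry Δ) (hδ : δ ≠ γ) (hu : ‖u‖ = 1)
    (hx : x ∈ face δ u) {ε : ℝ} (hε₀ : 0 ≤ ε) (hε₁ : ε ≤ 1) :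
    ∃ y ∈ face δ u, ∀ (z : E γ) (φ : StrongDual ℝ Y), ‖z‖ = 1 → Supports Δ γ z φ →
      φ (Δ y) = ε * φ (Δ x) := by
  have hc : updateAt x γ 0 ∈ face δ u := updateAt_mem_face_of_ne hu hx hδ (by simp)
  obtain ⟨y, hy, hyx⟩ := hΔ.convex_image_face hu ⟨_, hx, rfl⟩ ⟨_, hc, rfl⟩ hε₀
    (sub_nonneg.2 hε₁) (add_sub_cancel ε 1)
  refine ⟨y, hy, fun z φ hz hφ => ?_⟩
  have hφc : φ (Δ (updateAt x γ 0)) = 0 :=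
    hφ.map_eq_of_apply_eq_smul hΔ hz hc.1 (by rw [updateAt_self, zero_smul])
  rw [hyx, map_add, map_smul, map_smul, hφc, smul_zero, add_zero, smul_eq_mul]

variable [Nontrivial (E γ)] {ε : ℝ}

theorem norm_apply_le_of_map_eq_mul_map (hΔ : IsSphereIsometry Δ) (hδ : δ ≠ γ) (hu : ‖u‖ = 1)
    (hx : x ∈ face δ u) (hy : y ∈ face δ u) (hε₀ : 0 ≤ ε)
    (h : ∀ (z : E γ) (φ : StrongDual ℝ Y), ‖z‖ = 1 → Supports Δ γ z φ →
      φ (Δ y) = ε * φ (Δ x)) : ‖y γ‖ ≤ ε * ‖x γ‖ := by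
  obtain ⟨v, hv, hyv⟩ := exists_norm_eq_one_and_eq_norm_smul (y γ)
  obtain ⟨φ, hφ⟩ := hΔ.exists_supports hv
  rw [← hφ.map_eq_of_apply_eq_smul hΔ hv hy.1 hyv, h v φ hv hφ]
  exact mul_le_mul_of_nonneg_left
    ((le_abs_self _).trans (hφ.abs_map_le_norm_apply hΔ hv hδ hu hx)) hε₀

theorem norm_apply_sub_smul_sq_le (hΔ : IsSphereIsometry Δ) (hδ : δ ≠ γ) (hu : ‖u‖ = 1)
    (hx : x ∈ face δ u) (hy : y ∈ face δ u) (hε₀ : 0 ≤ ε)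
    (h : ∀ (z : E γ) (φ : StrongDual ℝ Y), ‖z‖ = 1 → Supports Δ γ z φ →
      φ (Δ y) = ε * φ (Δ x)) : ‖y γ - ε • x γ‖ ^ 2 ≤ ε ^ 3 := by
  obtain ⟨v, hv, hxv⟩ := exists_norm_eq_one_and_eq_norm_smul (x γ)
  obtain ⟨φ, hφ⟩ := hΔ.exists_supports hv
  have hyγ := hΔ.norm_apply_le_of_map_eq_mul_map hδ hu hx hy hε₀ h
  have hinner : ε * ‖x γ‖ - (ε * ‖x γ‖) ^ 2 / 2 ≤ ⟪v, y γ⟫ := by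
    have hnorm : ‖y γ‖ ^ 2 ≤ (ε * ‖x γ‖) ^ 2 := pow_le_pow_left₀ (norm_nonneg _) hyγ 2
    have habs := hφ.abs_map_sub_inner_le hΔ hv hy.1
    rw [h v φ hv hφ, hφ.map_eq_of_apply_eq_smul hΔ hv hx.1 hxv] at habs
    linarith [(abs_le.1 habs).2]
  calc ‖y γ - ε • x γ‖ ^ 2
      = ‖y γ - (ε * ‖x γ‖) • v‖ ^ 2 := by rw [mul_smul, ← hxv]
    _ ≤ (ε * ‖x γ‖) ^ 3 := norm_sub_smul_sq_le hv (mul_nonneg hε₀ (norm_nonneg _)) hyγ hinner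
    _ ≤ ε ^ 3 := by
      have hxγ : ‖x γ‖ ≤ 1 := (linfty_norm_apply_le x γ).trans hx.1.le
      gcongr
      exact mul_le_of_le_one_right hε₀ hxγ

theorem map_eq_inner_of_mem_face (hΔ : IsSphereIsometry Δ) (hδ : δ ≠ γ) (hu : ‖u‖ = 1)
    (hx : x ∈ face δ u) {z : E γ} (hz : ‖z‖ = 1) {φ : StrongDual ℝ Y}
    (hφ : Supports Δ γ z φ) : φ (Δ x) = ⟪z, x γ⟫ := by
  have hbound : ∀ t : ℝ, 0 < t → t ≤ 1 → |φ (Δ x) - ⟪z, x γ⟫| ≤ 2 * t := fun t ht₀ ht₁ => by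
    obtain ⟨y, hy, hyx⟩ := hΔ.exists_map_eq_mul_map hδ hu hx (sq_nonneg t) (pow_le_one₀ ht₀.le ht₁)
    have hyγ : ‖y γ‖ ≤ t ^ 2 :=
      (hΔ.norm_apply_le_of_map_eq_mul_map hδ hu hx hy (sq_nonneg t) hyx).trans <|
        mul_le_of_le_one_right (sq_nonneg t) ((linfty_norm_apply_le x γ).trans hx.1.le)
    have hnear : |t ^ 2 * φ (Δ x) - ⟪z, y γ⟫| ≤ (t ^ 2) ^ 2 / 2 := by
      rw [← hyx z φ hz hφ]
      exact (hφ.abs_map_sub_inner_le hΔ hz hy.1).trans (by gcongr)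
    have hfar : |⟪z, y γ⟫ - t ^ 2 * ⟪z, x γ⟫| ≤ t ^ 3 := by
      rw [← real_inner_smul_right, ← inner_sub_right]
      refine (abs_real_inner_le_norm _ _).trans ?_
      rw [hz, one_mul]
      refine le_of_sq_le_sq ?_ (by positivity)
      exact (hΔ.norm_apply_sub_smul_sq_le hδ hu hx hy (sq_nonneg t) hyx).trans_eq (by ring)
    have hscaled : t ^ 2 * |φ (Δ x) - ⟪z, x γ⟫| ≤ t ^ 2 * (2 * t) := by
      rw [← abs_of_pos (pow_pos ht₀ 2), ← abs_mul, abs_of_pos (pow_pos ht₀ 2), mul_sub]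
      refine (abs_sub_le _ ⟪z, y γ⟫ _).trans ((add_le_add hnear hfar).trans ?_)
      nlinarith [pow_pos ht₀ 3]
    exact le_of_mul_le_mul_left hscaled (pow_pos ht₀ 2)
  refine sub_eq_zero.1 (abs_nonpos_iff.1 (le_of_forall_pos_le_add fun e he => ?_))
  have := hbound (min 1 (e / 2)) (by positivity) (min_le_left _ _)
  linarith [min_le_right 1 (e / 2)]

end IsSphereIsometry

section Coordinates

variable [∀ γ, Nontrivial (E γ)] {Δ : lp E ⊤ → Y} {γ : Γ} {x : lp E ⊤}

theorem IsSphereIsometry.map_convexCombination_of_mem_face (hΔ : IsSphereIsometry Δ) {δ : Γ}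
    {u : E δ} (hu : ‖u‖ = 1) {a b : lp E ⊤} (ha : a ∈ face δ u) (hb : b ∈ face δ u) {s t : ℝ}
    (hs : 0 ≤ s) (ht : 0 ≤ t) (hst : s + t = 1) : Δ (s • a + t • b) = s • Δ a + t • Δ b := by
  obtain ⟨w, hw, hwab⟩ := hΔ.convex_image_face hu ⟨a, ha, rfl⟩ ⟨b, hb, rfl⟩ hs ht hst
  suffices hweq : w = s • a + t • b by rw [← hweq, hwab]
  ext γ
  change w γ = s • a γ + t • b γ
  rcases eq_or_ne δ γ with rfl | hδ
  · rw [hw.2, ha.2, hb.2, ← add_smul, hst, one_smul]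
  · refine sub_eq_zero.1 (eq_zero_of_forall_inner_eq_zero fun z hz => ?_)
    obtain ⟨φ, hφ⟩ := hΔ.exists_supports hz
    rw [inner_sub_right, inner_add_right, real_inner_smul_right, real_inner_smul_right,
      ← hΔ.map_eq_inner_of_mem_face hδ hu hw hz hφ, ← hΔ.map_eq_inner_of_mem_face hδ hu ha hz hφ,
      ← hΔ.map_eq_inner_of_mem_face hδ hu hb hz hφ, hwab]
    simp

namespace Supports

variable {z : E γ} {φ : StrongDual ℝ Y}

theorem map_eq_inner_of_norm_apply_eq_one [Nontrivial Γ] (hφ : Supports Δ γ z φ)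
    (hΔ : IsSphereIsometry Δ) (hz : ‖z‖ = 1) (hx : ‖x‖ = 1) (hxγ : ‖x γ‖ = 1) :
    φ (Δ x) = ⟪z, x γ⟫ := by
  obtain ⟨δ, hδ⟩ := exists_ne γ
  obtain ⟨u, hu, hxu⟩ := exists_norm_eq_one_and_eq_norm_smul (x δ)
  have hxδ : ‖x δ‖ ≤ 1 := (linfty_norm_apply_le x δ).trans hx.le
  have hu' : ‖-u‖ = 1 := by rwa [norm_neg]
  have hmem : ∀ v : E δ, ‖v‖ = 1 → updateAt x δ v ∈ face γ (x γ) := fun v hv =>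
    updateAt_mem_face_of_ne hxγ ⟨hx, rfl⟩ hδ.symm hv.le
  have hval : ∀ v : E δ, ‖v‖ = 1 → φ (Δ (updateAt x δ v)) = ⟪z, x γ⟫ := fun v hv => by
    rw [hΔ.map_eq_inner_of_mem_face hδ hv (updateAt_mem_face hx.le hv) hz hφ,
      updateAt_of_ne x hδ.symm]
  have hcomb : x = ((1 + ‖x δ‖) / 2) • updateAt x δ u + ((1 - ‖x δ‖) / 2) • updateAt x δ (-u) := by
    ext β
    change x β = ((1 + ‖x δ‖) / 2) • updateAt x δ u β + ((1 - ‖x δ‖) / 2) • updateAt x δ (-u) β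
    rcases eq_or_ne β δ with rfl | hβ
    · rw [updateAt_self, updateAt_self]
      nth_rw 1 [hxu]
      module
    · rw [updateAt_of_ne x hβ, updateAt_of_ne x hβ]
      module
  have hΔx := hΔ.map_convexCombination_of_mem_face hxγ (hmem u hu) (hmem (-u) hu')
    (s := (1 + ‖x δ‖) / 2) (t := (1 - ‖x δ‖) / 2) (by positivity) (by linarith) (by ring)
  rw [← hcomb] at hΔx
  rw [hΔx, map_add, map_smul, map_smul, hval u hu, hval (-u) hu', smul_eq_mul, smul_eq_mul]
  ring

theorem map_eq_inner_of_norm_apply_lt_one (hφ : Supports Δ γ z φ) (hΔ : IsSphereIsometry Δ)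
    (hz : ‖z‖ = 1) (hx : ‖x‖ = 1) (hxγ : ‖x γ‖ < 1) : φ (Δ x) = ⟪z, x γ⟫ := by
  refine sub_eq_zero.1 (abs_nonpos_iff.1 (le_of_forall_pos_le_add fun ε hε => ?_))
  have : Nonempty Γ := ⟨γ⟩
  obtain ⟨_, ⟨δ, rfl⟩, hlt, -⟩ := (lp.isLUB_norm x).exists_between
    (hx.symm ▸ max_lt hxγ (sub_lt_self 1 hε) : max ‖x γ‖ (1 - ε) < ‖x‖)
  obtain ⟨hγδ, hεδ⟩ := max_lt_iff.1 hlt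
  have hδ : δ ≠ γ := by
    rintro rfl
    exact hγδ.false
  obtain ⟨u, hu, hxu⟩ := exists_norm_eq_one_and_eq_norm_smul (x δ)
  have ha := updateAt_mem_face hx.le hu
  have hxδ : ‖x δ‖ ≤ 1 := (linfty_norm_apply_le x δ).trans hx.le
  have hdist : ‖u - x δ‖ = 1 - ‖x δ‖ := by
    nth_rw 1 [hxu]
    rw [show u - ‖x δ‖ • u = (1 - ‖x δ‖) • u by module, norm_smul, hu, mul_one,
      Real.norm_of_nonneg (by linarith)]
  have hle := (hφ.abs_map_sub_map_le hΔ ha.1 hx).trans (norm_updateAt_sub_le x δ u)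
  rw [hΔ.map_eq_inner_of_mem_face hδ hu ha hz hφ, updateAt_of_ne x hδ.symm, abs_sub_comm,
    hdist] at hle
  linarith

theorem map_eq_inner [Nontrivial Γ] (hφ : Supports Δ γ z φ) (hΔ : IsSphereIsometry Δ)
    (hz : ‖z‖ = 1) (hx : ‖x‖ = 1) : φ (Δ x) = ⟪z, x γ⟫ :=
  ((linfty_norm_apply_le x γ).trans_eq hx).eq_or_lt.elim
    (hφ.map_eq_inner_of_norm_apply_eq_one hΔ hz hx)
    (hφ.map_eq_inner_of_norm_apply_lt_one hΔ hz hx)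

end Supports

end Coordinates

namespace IsSphereIsometry

variable {Δ : lp E ⊤ → Y}

theorem exists_linearIsometryEquiv_of_nontrivial [Nontrivial Γ] [∀ γ, Nontrivial (E γ)]
    (hΔ : IsSphereIsometry Δ) : ∃ T : lp E ⊤ ≃ₗᵢ[ℝ] Y, ∀ x, ‖x‖ = 1 → T x = Δ x := by
  choose φ hφ using fun i : Σ γ, {z : E γ // ‖z‖ = 1} => hΔ.exists_supports i.2.2
  refine hΔ.exists_linearIsometryEquiv (φ := fun i => (φ i).toLinearMap)
    (ψ := fun i => innerₛₗ ℝ i.2.1 ∘ₗ lp.evalₗ E ⊤ i.1)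
    (fun i x hx => (hφ i).map_eq_inner hΔ i.2.2 hx) fun x h => ?_
  ext γ
  exact eq_zero_of_forall_inner_eq_zero fun z hz => h ⟨γ, z, hz⟩

theorem exists_linearIsometryEquiv_of_subsingleton [Subsingleton Γ]
    (hΔ : IsSphereIsometry Δ) : ∃ T : lp E ⊤ ≃ₗᵢ[ℝ] Y, ∀ x, ‖x‖ = 1 → T x = Δ x := by
  have hpar : ∀ x y : lp E ⊤, ‖x + y‖ * ‖x + y‖ + ‖x - y‖ * ‖x - y‖ =
      2 * (‖x‖ * ‖x‖ + ‖y‖ * ‖y‖) := fun x y => by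
    rcases isEmpty_or_nonempty Γ with hΓ | ⟨⟨γ⟩⟩
    · simp [lp.eq_zero' x, lp.eq_zero' y]
    · have hnorm : ∀ w : lp E ⊤, ‖w‖ = ‖w γ‖ := fun w =>
        le_antisymm (lp.norm_le_of_forall_le (norm_nonneg _) fun δ => by
          rw [Subsingleton.elim δ γ]) (linfty_norm_apply_le w γ)
      simpa only [hnorm, lp.coeFn_add, lp.coeFn_sub, Pi.add_apply, Pi.sub_apply, sq]
        using parallelogram_law_with_norm ℝ (x γ) (y γ)
  let _ : InnerProductSpace ℝ (lp E ⊤) := InnerProductSpace.ofNorm (𝕜 := ℝ) hpar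
  exact hΔ.exists_linearIsometryEquiv_of_innerProductSpace

end IsSphereIsometry

end FamilyInner

theorem mazur_ulam_property_ell_infty_general {Γ : Type*} {E : Γ → Type*}
    [∀ γ, NormedAddCommGroup (E γ)] [∀ γ, InnerProductSpace ℝ (E γ)] [∀ γ, Nontrivial (E γ)]
    {Y : Type*} [NormedAddCommGroup Y] [NormedSpace ℝ Y] {Δ : lp E ⊤ → Y}
    (hΔ : IsSphereIsometry Δ) : ∃ T : lp E ⊤ ≃ₗᵢ[ℝ] Y, ∀ x, ‖x‖ = 1 → T x = Δ x := by
  rcases subsingleton_or_nontrivial Γ with _ | _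
  · exact hΔ.exists_linearIsometryEquiv_of_subsingleton
  · exact hΔ.exists_linearIsometryEquiv_of_nontrivial

/-- `ℓ_∞(Γ, ℂ)` (bounded complex functions on a non-empty set `Γ`
with the sup norm, realized as `lp (fun _ : Γ => ℂ) ∞`) satisfies the Mazur–Ulam
property: every surjective isometry from its unit sphere onto the unit sphere of a
real Banach space `Y` extends to a surjective real-linear isometry onto `Y`. -/
theorem mazur_ulam_property_ell_infty
    {Γ : Type*} [Nonempty Γ]
    {Y : Type*} [NormedAddCommGroup Y] [NormedSpace ℝ Y] [CompleteSpace Y]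
    (Δ : lp (fun _ : Γ => ℂ) ⊤ → Y)
    (hmap : ∀ x : lp (fun _ : Γ => ℂ) ⊤, ‖x‖ = 1 → ‖Δ x‖ = 1)
    (hsurj : ∀ y : Y, ‖y‖ = 1 → ∃ x : lp (fun _ : Γ => ℂ) ⊤, ‖x‖ = 1 ∧ Δ x = y)
    (hiso : ∀ x y : lp (fun _ : Γ => ℂ) ⊤, ‖x‖ = 1 → ‖y‖ = 1 →
      ‖Δ x - Δ y‖ = ‖x - y‖) :
    ∃ T : lp (fun _ : Γ => ℂ) ⊤ → Y,
      (∀ x y : lp (fun _ : Γ => ℂ) ⊤, T (x + y) = T x + T y) ∧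
      (∀ (r : ℝ) (x : lp (fun _ : Γ => ℂ) ⊤), T (r • x) = r • T x) ∧
      (∀ x : lp (fun _ : Γ => ℂ) ⊤, ‖T x‖ = ‖x‖) ∧
      Function.Surjective T ∧
      (∀ x : lp (fun _ : Γ => ℂ) ⊤, ‖x‖ = 1 → T x = Δ x) := by
  obtain ⟨T, hT⟩ := mazur_ulam_property_ell_infty_general ⟨hmap, hsurj, hiso⟩
  exact ⟨T, map_add T, map_smul T, T.norm_map, T.surjective, hT⟩
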